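/- arXiv:2205.12515 — 2 statements merged into one kernel-verified Lean document; each statement's English description precedes it below -/
import Mathlib

section
/- Let 𝒜 be a nonempty finite type, let w : 𝒜 → ℝ, let p_w be the softmax distribution of w, and let Ent(w) = −∑_{a∈𝒜} p_w(a)·log(p_w(a)) be its entropy. Then for every ā ∈ 𝒜, the partial derivative of the entropy with respect to the coordinate w(ā) — i.e. the derivative at t = w(ā) of the map t ↦ entropy of the softmax of w with its ā-coordinate replaced by t — equals −p_w(ā)·log(p_w(ā)) − p_w(ā)·Ent(w). -/
open Real Finset

/-- The softmax distribution of a weight vector `w`. -/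
noncomputable def softmax {𝒜 : Type*} [Fintype 𝒜] (w : 𝒜 → ℝ) (a : 𝒜) : ℝ :=
  Real.exp (w a) / ∑ a' : 𝒜, Real.exp (w a')

/-- The entropy of the softmax distribution of `w`. -/
noncomputable def softmaxEntropy {𝒜 : Type*} [Fintype 𝒜] (w : 𝒜 → ℝ) : ℝ :=
  -∑ a : 𝒜, softmax w a * Real.log (softmax w a)

/-!
Let `E` be the expectation under the softmax distribution `p`. The log-partition function has
differential `E`, so the score `d(log p a) = proj a - E` and `dp a = p a • (proj a - E)`. In
`dEnt = -∑ a, (p a * (1 + log p a)) • (proj a - E)` the constant `1` drops out because the score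
has mean zero, which leaves `-∑ a, (p a * (log p a + Ent)) • proj a`.
-/

section

variable {𝒜 : Type*} [Fintype 𝒜]

/-- The expectation `v ↦ ∑ a, p_w(a) * v a` under the softmax distribution of `w`, as a continuous
linear functional so that it can serve as a Fréchet derivative. -/
noncomputable def softmaxExpectation (w : 𝒜 → ℝ) : (𝒜 → ℝ) →L[ℝ] ℝ :=
  ∑ a, softmax w a • ContinuousLinearMap.proj a

theorem sum_smul_proj_apply_single {R : Type*} [CommSemiring R] [TopologicalSpace R]
    [IsTopologicalSemiring R] [DecidableEq 𝒜] (c : 𝒜 → R) (i : 𝒜) :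
    (∑ a, c a • ContinuousLinearMap.proj (R := R) (φ := fun _ : 𝒜 => R) a) (Pi.single i 1) =
      c i := by
  simp [Pi.single_apply]

variable [Nonempty 𝒜]

theorem sum_exp_pos (w : 𝒜 → ℝ) : 0 < ∑ a, exp (w a) :=
  sum_pos (fun _ _ => exp_pos _) univ_nonempty

theorem softmax_pos (w : 𝒜 → ℝ) (a : 𝒜) : 0 < softmax w a :=
  div_pos (exp_pos _) (sum_exp_pos w)

theorem sum_softmax (w : 𝒜 → ℝ) : ∑ a, softmax w a = 1 := by
  simp only [softmax, ← sum_div, div_self (sum_exp_pos w).ne']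

theorem log_softmax (w : 𝒜 → ℝ) (a : 𝒜) :
    log (softmax w a) = w a - log (∑ b, exp (w b)) := by
  rw [softmax, log_div (exp_ne_zero _) (sum_exp_pos w).ne', log_exp]

theorem sum_softmax_smul_proj_sub_softmaxExpectation (w : 𝒜 → ℝ) :
    ∑ a, softmax w a • (ContinuousLinearMap.proj a - softmaxExpectation w) = 0 := by
  simp only [smul_sub, sum_sub_distrib, ← sum_smul, sum_softmax, one_smul]
  exact sub_self _

theorem hasFDerivAt_log_sum_exp (w : 𝒜 → ℝ) :
    HasFDerivAt (fun w : 𝒜 → ℝ => log (∑ a, exp (w a))) (softmaxExpectation w) w := by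
  have h_sum : HasFDerivAt (fun w : 𝒜 → ℝ => ∑ a, exp (w a))
      (∑ a, exp (w a) • ContinuousLinearMap.proj (R := ℝ) a) w :=
    HasFDerivAt.fun_sum fun a _ => (hasFDerivAt_apply a w).exp
  refine (h_sum.log (sum_exp_pos w).ne').congr_fderiv ?_
  simp only [softmaxExpectation, softmax, smul_sum, smul_smul, div_eq_inv_mul]

theorem hasFDerivAt_log_softmax (w : 𝒜 → ℝ) (a : 𝒜) :
    HasFDerivAt (fun w => log (softmax w a))
      (ContinuousLinearMap.proj a - softmaxExpectation w) w := by
  simp only [log_softmax]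
  exact (hasFDerivAt_apply a w).sub (hasFDerivAt_log_sum_exp w)

theorem hasFDerivAt_softmax (w : 𝒜 → ℝ) (a : 𝒜) :
    HasFDerivAt (fun w => softmax w a)
      (softmax w a • (ContinuousLinearMap.proj a - softmaxExpectation w)) w := by
  simpa only [exp_log (softmax_pos _ a)] using (hasFDerivAt_log_softmax w a).exp

theorem hasFDerivAt_softmaxEntropy (w : 𝒜 → ℝ) :
    HasFDerivAt softmaxEntropy
      (-∑ a, (softmax w a * (log (softmax w a) + softmaxEntropy w)) •
        ContinuousLinearMap.proj (R := ℝ) a) w := by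
  have h_deriv : HasFDerivAt softmaxEntropy
      (-∑ a, (softmax w a • (ContinuousLinearMap.proj a - softmaxExpectation w) +
        log (softmax w a) • softmax w a •
          (ContinuousLinearMap.proj a - softmaxExpectation w))) w :=
    (HasFDerivAt.fun_sum fun a _ =>
      (hasFDerivAt_softmax w a).mul (hasFDerivAt_log_softmax w a)).neg
  have h_entropy : ∑ a, log (softmax w a) * softmax w a = -softmaxEntropy w := by
    simp only [softmaxEntropy, neg_neg, mul_comm]
  refine h_deriv.congr_fderiv (congrArg Neg.neg ?_)
  calc
    _ = ∑ a, (log (softmax w a) * softmax w a) •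
          (ContinuousLinearMap.proj a - softmaxExpectation w) := by
      rw [sum_add_distrib, sum_softmax_smul_proj_sub_softmaxExpectation, zero_add]
      simp only [smul_smul]
    _ = ∑ a, (log (softmax w a) * softmax w a) • ContinuousLinearMap.proj (R := ℝ) a +
          softmaxEntropy w • softmaxExpectation w := by
      simp only [smul_sub, sum_sub_distrib, ← sum_smul, h_entropy, neg_smul, sub_neg_eq_add]
    _ = _ := by
      simp only [softmaxExpectation, smul_sum, smul_smul, ← sum_add_distrib, ← add_smul]
      congr! 2 with a
      ring

end

/-- The partial derivative of the softmax entropy with respect to coordinate `abar`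
equals `-p(abar) log p(abar) - p(abar) · Ent(w)`. -/
theorem softmaxEntropy_hasDerivAt_coord {𝒜 : Type*} [Fintype 𝒜] [Nonempty 𝒜] [DecidableEq 𝒜]
    (w : 𝒜 → ℝ) (abar : 𝒜) :
    HasDerivAt (fun t : ℝ => softmaxEntropy (Function.update w abar t))
      (-softmax w abar * Real.log (softmax w abar)
        - softmax w abar * softmaxEntropy w) (w abar) := by
  have h_entropy : HasFDerivAt softmaxEntropy _ (Function.update w abar (w abar)) :=
    hasFDerivAt_softmaxEntropy _
  refine (h_entropy.comp_hasDerivAt _ (hasDerivAt_update w abar (w abar))).congr_deriv ?_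
  rw [Function.update_eq_self, neg_apply, sum_smul_proj_apply_single]
  ring
end

section
/- Let S be a nonempty finite type, let P : S × S → ℝ be a row-stochastic matrix (all entries nonnegative and every row summing to 1), let γ ∈ ℝ with 0 ≤ γ < 1, and let r : S → ℝ. Then the Bellman-type linear system v = r + γ·(P ⬝ v) has a unique solution v : S → ℝ, namely v = (I − γ·P)⁻¹ ⬝ r. -/
open Matrix Finset

/-! If every row of `A` has absolute sum less than `1`, then
`∑ j ≠ i, ‖A i j‖ < 1 - ‖A i i‖ ≤ ‖1 - A i i‖`, so `1 - A` is strictly diagonally dominant and hence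
invertible by Gershgorin's theorem. Discounting a row-stochastic matrix by `γ < 1` makes every row
sum equal to `γ`. -/

lemma det_one_sub_ne_zero_of_sum_norm_row_lt_one {K n : Type*} [NormedField K] [Fintype n]
    [DecidableEq n] {A : Matrix n n K} (hA : ∀ i, ∑ j, ‖A i j‖ < 1) : (1 - A).det ≠ 0 := by
  refine det_ne_zero_of_sum_row_lt_diag fun i ↦ ?_
  calc ∑ j ∈ univ.erase i, ‖(1 - A) i j‖
      = ∑ j ∈ univ.erase i, ‖A i j‖ := sum_congr rfl fun j hj ↦ by
        rw [Matrix.sub_apply, one_apply_ne (ne_of_mem_erase hj).symm, zero_sub, norm_neg]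
    _ = ∑ j, ‖A i j‖ - ‖A i i‖ := sum_erase_eq_sub (mem_univ i)
    _ < 1 - ‖A i i‖ := sub_lt_sub_right (hA i) _
    _ ≤ ‖(1 - A) i i‖ := by
        simpa only [Matrix.sub_apply, one_apply_eq, norm_one] using norm_sub_norm_le 1 (A i i)

lemma mulVec_eq_iff_eq_inv_mulVec {R n : Type*} [CommRing R] [Fintype n] [DecidableEq n]
    {M : Matrix n n R} (hM : IsUnit M.det) {r v : n → R} :
    M *ᵥ v = r ↔ v = M⁻¹ *ᵥ r := by
  constructor
  · rintro rfl
    rw [mulVec_mulVec, nonsing_inv_mul M hM, one_mulVec]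
  · rintro rfl
    rw [mulVec_mulVec, mul_nonsing_inv M hM, one_mulVec]

lemma eq_add_mulVec_iff_one_sub_mulVec_eq {R n : Type*} [NonAssocRing R] [Fintype n] [DecidableEq n]
    {A : Matrix n n R} {r v : n → R} : v = r + A *ᵥ v ↔ (1 - A) *ᵥ v = r := by
  rw [sub_mulVec, one_mulVec, sub_eq_iff_eq_add]

theorem bellman_unique_solution_general {K S : Type*} [NormedField K] [Fintype S] [DecidableEq S]
    {A : Matrix S S K} (hA : ∀ i, ∑ j, ‖A i j‖ < 1) (r v : S → K) :
    v = r + A *ᵥ v ↔ v = (1 - A)⁻¹ *ᵥ r :=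
  eq_add_mulVec_iff_one_sub_mulVec_eq.trans <|
    mulVec_eq_iff_eq_inv_mulVec (det_one_sub_ne_zero_of_sum_norm_row_lt_one hA).isUnit

/-- For a row-stochastic matrix `P`, `0 ≤ γ < 1`, and reward vector `r`, the
Bellman system `v = r + γ • (P *ᵥ v)` has the unique solution
`v = (1 - γ • P)⁻¹ *ᵥ r`. -/
theorem bellman_unique_solution {S : Type*} [Fintype S] [Nonempty S] [DecidableEq S]
    (P : Matrix S S ℝ) (hP0 : ∀ i j, 0 ≤ P i j) (hP1 : ∀ i, ∑ j, P i j = 1)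
    (γ : ℝ) (hγ0 : 0 ≤ γ) (hγ1 : γ < 1) (r : S → ℝ) :
    ∀ v : S → ℝ, v = r + γ • (P *ᵥ v) ↔ v = (1 - γ • P)⁻¹ *ᵥ r := by
  have hA (i : S) : ∑ j, ‖(γ • P) i j‖ < 1 := by
    calc ∑ j, ‖(γ • P) i j‖
        = γ * ∑ j, P i j := by simp [mul_sum, abs_of_nonneg, hγ0, hP0]
      _ = γ := by rw [hP1, mul_one]
      _ < 1 := hγ1
  simpa only [smul_mulVec] using bellman_unique_solution_general hA r
end
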